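/- arXiv:2601.12881 — 11 statements merged into one kernel-verified Lean document; each statement's English description precedes it below -/
import Mathlib

section
/- For every 1 ≤ i ≤ N−1, the Demazure–Lusztig operator satisfies the quadratic Hecke relation (T_i − t·id) ∘ (T_i + id) = 0 on F[x_1,…,x_N]; equivalently, T_i(T_i(P)) = (t−1)·T_i(P) + t·P for every polynomial P. -/
open MvPolynomial

noncomputable section

/-- `Frac` is the field `F = ℂ(t)` of rational functions over `ℂ`. -/
abbrev Frac : Type := RatFunc ℂ

/-- The polynomial ring `R = F[x_1, …, x_N]`. -/
abbrev Pol (N : ℕ) : Type := MvPolynomial (Fin N) Frac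

/-- The parameter `t ∈ F = ℂ(t)`. -/
def tF : Frac := RatFunc.X

/-- `si N i hi` is the `F`-algebra automorphism of `F[x_1,…,x_N]` exchanging the variables
in positions `i` and `i+1` (0-indexed) and fixing all other variables. -/
def si (N i : ℕ) (hi : i + 1 < N) : Pol N → Pol N :=
  rename (⇑(Equiv.swap (⟨i, Nat.lt_of_succ_lt hi⟩ : Fin N) ⟨i + 1, hi⟩))

/-- `IsDemazureLusztig N i hi T` asserts that the `F`-linear map `T` satisfies the identity
`(x_i - x_{i+1}) · T(P) = (t-1)·(x_i·P - x_{i+1}·s_i(P)) + (x_i - x_{i+1})·s_i(P)`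
for all `P`, which uniquely characterizes the Demazure–Lusztig operator `T_i`. -/
def IsDemazureLusztig (N i : ℕ) (hi : i + 1 < N) (T : Pol N →ₗ[Frac] Pol N) : Prop :=
  ∀ P : Pol N,
    (X (⟨i, Nat.lt_of_succ_lt hi⟩ : Fin N) - X ⟨i + 1, hi⟩) * T P =
      (C tF - 1) * (X (⟨i, Nat.lt_of_succ_lt hi⟩ : Fin N) * P
          - X (⟨i + 1, hi⟩ : Fin N) * si N i hi P)
        + (X (⟨i, Nat.lt_of_succ_lt hi⟩ : Fin N) - X ⟨i + 1, hi⟩) * si N i hi P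

/-- the Demazure–Lusztig operator satisfies the quadratic Hecke relation
`T_i(T_i(P)) = (t-1)·T_i(P) + t·P` for every polynomial `P`. -/
theorem stmt_1 (N : ℕ) (hN : 2 ≤ N) (i : ℕ) (hi : i + 1 < N)
    (T : Pol N →ₗ[Frac] Pol N) (hT : IsDemazureLusztig N i hi T) (P : Pol N) :
    T (T P) = (C tF - 1) * T P + C tF * P := by
  have hne : (⟨i, Nat.lt_of_succ_lt hi⟩ : Fin N) ≠ ⟨i + 1, hi⟩ := by
    simp [Fin.ext_iff]
  have h1 := hT (T P)
  have h2 := hT P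
  have h3 := congrArg (rename (R := Frac)
    (⇑(Equiv.swap (⟨i, Nat.lt_of_succ_lt hi⟩ : Fin N) ⟨i + 1, hi⟩))) h2
  have hss : rename (R := Frac) (⇑(Equiv.swap (⟨i, Nat.lt_of_succ_lt hi⟩ : Fin N) ⟨i + 1, hi⟩))
      (rename (⇑(Equiv.swap (⟨i, Nat.lt_of_succ_lt hi⟩ : Fin N) ⟨i + 1, hi⟩)) P) = P := by
    rw [rename_rename]
    have : (⇑(Equiv.swap (⟨i, Nat.lt_of_succ_lt hi⟩ : Fin N) ⟨i + 1, hi⟩)) ∘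
        (⇑(Equiv.swap (⟨i, Nat.lt_of_succ_lt hi⟩ : Fin N) ⟨i + 1, hi⟩)) = id := by
      funext x
      simp
    rw [this, rename_id_apply]
  unfold si at h1 h2 h3
  simp only [map_add, map_sub, map_mul, map_one, rename_X, rename_C, Equiv.swap_apply_left,
    Equiv.swap_apply_right, hss] at h3
  have hd : (X (⟨i, Nat.lt_of_succ_lt hi⟩ : Fin N) - X ⟨i + 1, hi⟩ : Pol N) ≠ 0 := by
    rw [sub_ne_zero]
    exact fun h => hne (X_injective h)
  generalize (rename (⇑(Equiv.swap (⟨i, Nat.lt_of_succ_lt hi⟩ : Fin N) ⟨i + 1, hi⟩))) (T P) = sQ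
    at h1 h3
  generalize (rename (⇑(Equiv.swap (⟨i, Nat.lt_of_succ_lt hi⟩ : Fin N) ⟨i + 1, hi⟩))) P = sP
    at h2 h3
  generalize T (T P) = TQ at *
  generalize T P = Q at *
  generalize (X (⟨i, Nat.lt_of_succ_lt hi⟩ : Fin N) : Pol N) = a at *
  generalize (X (⟨i + 1, hi⟩ : Fin N) : Pol N) = b at *
  generalize (C tF : Pol N) = t at *
  apply mul_left_cancel₀ hd
  apply mul_left_cancel₀ hd
  linear_combination (a - b) * h1 + ((t - 1) * a - (t - 1) * (a - b)) * h2
    + ((t - 1) * b - (a - b)) * h3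
end
end

section
/- For every 1 ≤ i ≤ N−2, the Demazure–Lusztig operators satisfy the braid relation T_i ∘ T_{i+1} ∘ T_i = T_{i+1} ∘ T_i ∘ T_{i+1} as F-linear operators on F[x_1,…,x_N]. -/
open MvPolynomial

noncomputable section

/-- Abstract form of the braid relation in a domain with two ring endomorphisms. -/
theorem braid_abstract {A : Type*} [CommRing A] [IsDomain A] (s₁ s₂ : A →+* A) (x y z t : A)
    (hxy : x - y ≠ 0) (hxz : x - z ≠ 0) (hyz : y - z ≠ 0)
    (h1x : s₁ x = y) (h1y : s₁ y = x) (h1z : s₁ z = z) (h1t : s₁ t = t)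
    (h2x : s₂ x = x) (h2y : s₂ y = z) (h2z : s₂ z = y) (h2t : s₂ t = t)
    (i1 : ∀ p, s₁ (s₁ p) = p) (i2 : ∀ p, s₂ (s₂ p) = p)
    (br : ∀ p, s₁ (s₂ (s₁ p)) = s₂ (s₁ (s₂ p)))
    (T₁ T₂ : A → A)
    (H1 : ∀ p, (x - y) * T₁ p = (t - 1) * (x * p - y * s₁ p) + (x - y) * s₁ p)
    (H2 : ∀ p, (y - z) * T₂ p = (t - 1) * (y * p - z * s₂ p) + (y - z) * s₂ p) (p : A) :
    T₁ (T₂ (T₁ p)) = T₂ (T₁ (T₂ p)) := by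
  have e1 := H1 (T₂ (T₁ p))
  have e2 := H2 (T₁ p)
  have e3 := congrArg s₁ e2
  have e4 := H1 p
  have e5 := congrArg s₂ e4
  have e6 := congrArg s₁ e4
  have e7 := congrArg s₁ e5
  have f1 := H2 (T₁ (T₂ p))
  have f2 := H1 (T₂ p)
  have f3 := congrArg s₂ f2
  have f4 := H2 p
  have f5 := congrArg s₁ f4
  have f6 := congrArg s₂ f4
  have f7 := congrArg s₂ f5
  simp only [map_mul, map_sub, map_add, map_one, h1x, h1y, h1z, h1t, h2x, h2y, h2z, h2t, i1, i2,
    br] at e3 e5 e6 e7 f3 f5 f6 f7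
  have hL : (x - y) ^ 2 * (x - z) * (y - z) ^ 2 ≠ 0 := 
    mul_ne_zero (mul_ne_zero (pow_ne_zero _ hxy) hxz) (pow_ne_zero _ hyz)
  apply mul_left_cancel₀ hL
  linear_combination (y - z) * (e1 * (x - y) * (x - z) * (y - z)
      + e2 * ((t - 1) * x) * (x - y) * (x - z) + e3 * (x - t * y) * (x - y) * (y - z)
      + e4 * ((t - 1) * x) * ((t - 1) * y) * (x - z)
      + e5 * ((t - 1) * x) * (y - t * z) * (x - y)
      - e6 * (x - t * y) * ((t - 1) * x) * (y - z)
      + e7 * (x - t * y) * (x - t * z) * (x - y))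
    - (x - y) * (f1 * (x - y) * (x - z) * (y - z)
      + f2 * ((t - 1) * y) * (y - z) * (x - z) + f3 * (y - t * z) * (x - y) * (y - z)
      + f4 * ((t - 1) * y) * ((t - 1) * x) * (x - z)
      + f5 * ((t - 1) * y) * (x - t * y) * (y - z)
      - f6 * (y - t * z) * ((t - 1) * x) * (x - y)
      + f7 * (y - t * z) * (x - t * z) * (y - z))

/-- braid relation `T_i ∘ T_{i+1} ∘ T_i = T_{i+1} ∘ T_i ∘ T_{i+1}`
for the Demazure–Lusztig operators (here `T₁ = T_i`, `T₂ = T_{i+1}`). -/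
theorem stmt_2 (N : ℕ) (hN : 3 ≤ N) (i : ℕ) (hi : i + 2 < N)
    (T₁ T₂ : Pol N →ₗ[Frac] Pol N)
    (hT₁ : IsDemazureLusztig N i (Nat.lt_of_succ_lt hi) T₁)
    (hT₂ : IsDemazureLusztig N (i + 1) hi T₂)
    (P : Pol N) :
    T₁ (T₂ (T₁ P)) = T₂ (T₁ (T₂ P)) := by
  have ab : (⟨i, by omega⟩ : Fin N) ≠ ⟨i + 1, by omega⟩ := by simp
  have ac : (⟨i, by omega⟩ : Fin N) ≠ ⟨i + 1 + 1, hi⟩ := by simp; omega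
  have bc : (⟨i + 1, by omega⟩ : Fin N) ≠ ⟨i + 1 + 1, hi⟩ := by simp
  unfold IsDemazureLusztig si at hT₁ hT₂
  generalize (⟨i, Nat.lt_of_succ_lt (Nat.lt_of_succ_lt hi)⟩ : Fin N) = a at *
  generalize (⟨i + 1, Nat.lt_of_succ_lt hi⟩ : Fin N) = b at *
  generalize (⟨i + 1 + 1, hi⟩ : Fin N) = c at *
  have hX : ∀ {u v : Fin N}, u ≠ v → (X u - X v : Pol N) ≠ 0 := fun h h' =>
    h (X_injective (sub_eq_zero.mp h'))
  refine braid_abstract (rename (R := Frac) (Equiv.swap a b)).toRingHom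
    (rename (R := Frac) (Equiv.swap b c)).toRingHom (X a) (X b) (X c) (C tF)
    (hX ab) (hX ac) (hX bc) ?_ ?_ ?_ ?_ ?_ ?_ ?_ ?_ ?_ ?_ ?_ T₁ T₂ hT₁ hT₂ P
  · simp
  · simp
  · simp [Equiv.swap_apply_of_ne_of_ne ac.symm bc.symm]
  · simp
  · simp [Equiv.swap_apply_of_ne_of_ne ab ac]
  · simp
  · simp
  · simp
  · intro p
    simp [rename_rename, ← Equiv.coe_trans]
  · intro p
    simp [rename_rename, ← Equiv.coe_trans]
  · intro p
    simp only [AlgHom.toRingHom_eq_coe, RingHom.coe_coe, rename_rename]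
    congr 2
    funext u
    simp only [Function.comp, Equiv.swap_apply_def]
    grind
end
end

section
/- Let a, b ≥ 1 be integers and let (a_1,b_1), …, (a_n,b_n) be pairs of natural numbers, and set P = ∏_{i=1}^n (1 − q^{a_i} t^{b_i}) in ℂ[q,t]. Then 1 − q^a t^b divides P in ℂ[q,t] if and only if there exists an index i such that 1 − q^a t^b divides 1 − q^{a_i} t^{b_i} in ℂ[q,t]. -/
open MvPolynomial

noncomputable section

/-- `CQT` is the polynomial ring `ℂ[q,t]` in two indeterminates over `ℂ`. -/
abbrev CQT : Type := MvPolynomial (Fin 2) ℂ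

/-- The indeterminate `q` of `ℂ[q,t]`. -/
def qP : CQT := X 0

/-- The indeterminate `t` of `ℂ[q,t]`. -/
def tP : CQT := X 1

/-- for `a, b ≥ 1` and pairs `(a_i, b_i)`, the polynomial `1 - q^a t^b` divides
`P = ∏ᵢ (1 - q^{a_i} t^{b_i})` in `ℂ[q,t]` iff it divides one of the factors. -/
theorem stmt_6 (a b : ℕ) (ha : 1 ≤ a) (hb : 1 ≤ b) (n : ℕ) (A B : Fin n → ℕ) :
    (1 - qP ^ a * tP ^ b) ∣ (∏ i, (1 - qP ^ A i * tP ^ B i)) ↔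
      ∃ i, (1 - qP ^ a * tP ^ b) ∣ (1 - qP ^ A i * tP ^ B i) := by
  constructor
  · intro h
    -- evaluate at q = c * 2 ^ b, t = (2 ^ a)⁻¹ with c a primitive a-th root of unity
    have ha0 : a ≠ 0 := by omega
    have hc := Complex.isPrimitiveRoot_exp a ha0
    set c : ℂ := Complex.exp (2 * Real.pi * Complex.I / a) with hcdef
    have hnorm : ‖c‖ = 1 := hc.norm'_eq_one ha0
    let f : CQT →+* ℂ := MvPolynomial.eval ![c * 2 ^ b, ((2 : ℂ) ^ a)⁻¹]
    have hq : f qP = c * 2 ^ b := by simp [f, qP]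
    have ht : f tP = ((2 : ℂ) ^ a)⁻¹ := by simp [f, tP]
    have hf : ∀ x y : ℕ, f (1 - qP ^ x * tP ^ y) = 1 - (c * 2 ^ b) ^ x * (((2 : ℂ) ^ a)⁻¹) ^ y := by
      intro x y
      rw [map_sub, map_mul, map_pow, map_pow, map_one, hq, ht]
    have h0 : f (1 - qP ^ a * tP ^ b) = 0 := by
      rw [hf, mul_pow, hc.pow_eq_one, inv_pow, ← pow_mul, ← pow_mul, mul_comm b a, one_mul,
        mul_inv_cancel₀ (pow_ne_zero _ two_ne_zero), sub_self]
    have h1 := map_dvd f h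
    rw [h0, zero_dvd_iff, map_prod, Finset.prod_eq_zero_iff] at h1
    obtain ⟨i, -, hi⟩ := h1
    refine ⟨i, ?_⟩
    rw [hf, sub_eq_zero] at hi
    have h2 : c ^ A i * 2 ^ (b * A i) = 2 ^ (a * B i) := by
      rw [mul_pow, inv_pow, ← pow_mul, ← pow_mul] at hi
      have hne : (2 : ℂ) ^ (a * B i) ≠ 0 := pow_ne_zero _ two_ne_zero
      field_simp at hi
      exact hi.symm
    have h3 : (2 : ℝ) ^ (b * A i) = 2 ^ (a * B i) := by
      have := congrArg norm h2
      simpa [hnorm] using this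
    have h4 : b * A i = a * B i := pow_right_injective₀ (by norm_num) (by norm_num) h3
    rw [h4] at h2
    have h5 : c ^ A i = 1 := by
      have hne : (2 : ℂ) ^ (a * B i) ≠ 0 := pow_ne_zero _ two_ne_zero
      exact (mul_eq_right₀ hne).mp h2
    obtain ⟨k, hk⟩ := hc.dvd_of_pow_eq_one _ h5
    have h6 : B i = b * k := by
      rw [hk] at h4
      apply Nat.eq_of_mul_eq_mul_left ha
      rw [← h4]; ring
    rw [hk, h6, pow_mul, pow_mul, ← mul_pow]
    exact one_sub_dvd_one_sub_pow _ k
  · rintro ⟨i, hi⟩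
    exact hi.trans (Finset.dvd_prod_of_mem (fun i => 1 - qP ^ A i * tP ^ B i) (Finset.mem_univ i))
end
end

section
/- Let a, b ≥ 1 be integers, d = gcd(a,b), a' = a/d, b' = b/d, and let ω ∈ ℂ be a primitive a-th root of unity such that ω^{a'} is a primitive d-th root of unity. Let (a_1,b_1), …, (a_n,b_n) be pairs of natural numbers and set P = ∏_{i=1}^n (1 − q^{a_i} t^{b_i}) in ℂ[q,t]. Then 1 − q^a t^b divides P in ℂ[q,t] if and only if for every nonzero complex number u, the evaluation of P at q = ω·u^{−b'} and t = u^{a'} (with u^{−b'} the integer power of u in ℂ) is zero. -/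
open MvPolynomial

noncomputable section

/-- with `d = gcd(a,b)`, `a' = a/d`, `b' = b/d`, and `ω` a primitive `a`-th root
of unity such that `ω^{a'}` is a primitive `d`-th root of unity, `1 - q^a t^b` divides
`P = ∏ᵢ (1 - q^{a_i} t^{b_i})` iff `P` vanishes at `q = ω·u^{-b'}`, `t = u^{a'}` for every
nonzero complex `u`. -/
theorem stmt_7 (a b : ℕ) (ha : 1 ≤ a) (hb : 1 ≤ b)
    (d a' b' : ℕ) (hd : d = Nat.gcd a b) (ha' : a' = a / d) (hb' : b' = b / d)
    (ω : ℂ) (hω : IsPrimitiveRoot ω a) (hωa' : IsPrimitiveRoot (ω ^ a') d)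
    (n : ℕ) (A B : Fin n → ℕ) :
    (1 - qP ^ a * tP ^ b) ∣ (∏ i, (1 - qP ^ A i * tP ^ B i)) ↔
      ∀ u : ℂ, u ≠ 0 →
        eval (![ω * u ^ (-(b' : ℤ)), u ^ a'] : Fin 2 → ℂ)
          (∏ i, (1 - qP ^ A i * tP ^ B i)) = 0 := by
  have hdpos : 0 < d := hd ▸ Nat.gcd_pos_of_pos_left b ha
  have hae : a = a' * d := by
    rw [ha', Nat.div_mul_cancel (hd ▸ Nat.gcd_dvd_left a b)]
  have hbe : b = b' * d := by
    rw [hb', Nat.div_mul_cancel (hd ▸ Nat.gcd_dvd_right a b)]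
  have ha'pos : 0 < a' := by
    rcases Nat.eq_zero_or_pos a' with h | h
    · simp [h] at hae; omega
    · exact h
  have key : ∀ (u : ℂ), u ≠ 0 → ∀ k l : ℕ,
      eval (![ω * u ^ (-(b' : ℤ)), u ^ a'] : Fin 2 → ℂ) (1 - qP ^ k * tP ^ l)
        = 1 - ω ^ k * u ^ ((a' : ℤ) * l - b' * k) := by
    intro u hu k l
    simp only [qP, tP, map_sub, map_one, map_mul, map_pow, eval_X, Matrix.cons_val_zero,
      Matrix.cons_val_one, mul_pow]
    rw [mul_assoc, ← zpow_natCast (u ^ (-(b' : ℤ))) k, ← zpow_mul, ← pow_mul,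
      ← zpow_natCast u (a' * l), ← zpow_add₀ hu]
    congr 3
    push_cast
    ring
  constructor
  · rintro ⟨c, hc⟩ u hu
    rw [hc, map_mul, key u hu, hω.pow_eq_one]
    have : (a' : ℤ) * b - b' * a = 0 := by
      have h1 : (a : ℤ) = a' * d := by exact_mod_cast hae
      have h2 : (b : ℤ) = b' * d := by exact_mod_cast hbe
      rw [h1, h2]
      ring
    rw [this]
    simp
  · intro h
    have h2 := h 2 two_ne_zero
    rw [map_prod, Finset.prod_eq_zero_iff] at h2
    obtain ⟨i, -, hi⟩ := h2
    rw [key 2 two_ne_zero, sub_eq_zero] at hi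
    have hn := congrArg norm hi
    rw [norm_mul, norm_pow, hω.norm'_eq_one (by omega), norm_zpow] at hn
    simp only [norm_one, one_pow, one_mul, Complex.norm_ofNat] at hn
    have hm : (a' : ℤ) * B i - b' * A i = 0 := by
      have := zpow_right_injective₀ (a := (2 : ℝ)) (by norm_num) (by norm_num)
      apply this
      simpa using hn.symm
    rw [hm, zpow_zero, mul_one] at hi
    obtain ⟨k, hk⟩ := hω.dvd_of_pow_eq_one _ hi.symm
    have hBk : B i = b * k := by
      have h1 : a' * B i = b' * A i := by
        have : (a' : ℤ) * B i = b' * A i := by linarith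
        exact_mod_cast this
      apply Nat.eq_of_mul_eq_mul_left ha'pos
      calc a' * B i = b' * (a * k) := by rw [h1, hk]
        _ = b' * ((a' * d) * k) := by rw [← hae]
        _ = a' * ((b' * d) * k) := by ring
        _ = a' * (b * k) := by rw [← hbe]
    refine dvd_trans ?_ (Finset.dvd_prod_of_mem _ (Finset.mem_univ i))
    rw [hk, hBk, pow_mul, pow_mul, ← mul_pow]
    exact one_sub_dvd_one_sub_pow _ k
end
end

section
/- Let a, b ≥ 1 be integers and c, d be natural numbers. Then 1 − q^a t^b divides 1 − q^c t^d in ℂ[q,t] if and only if there exists a natural number r such that c = r·a and d = r·b. -/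
open MvPolynomial

noncomputable section

/-- for `a, b ≥ 1` and `c, d ∈ ℕ`, `1 - q^a t^b` divides `1 - q^c t^d` in
`ℂ[q,t]` iff there is `r ∈ ℕ` with `c = r·a` and `d = r·b`. -/
theorem stmt_8 (a b : ℕ) (ha : 1 ≤ a) (hb : 1 ≤ b) (c d : ℕ) :
    (1 - qP ^ a * tP ^ b) ∣ (1 - qP ^ c * tP ^ d) ↔ ∃ r : ℕ, c = r * a ∧ d = r * b := by
  constructor
  · rintro ⟨p, hp⟩
    have key : ∀ x y : ℂ, x ^ a * y ^ b = 1 → x ^ c * y ^ d = 1 := by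
      intro x y h
      have h2 := congrArg (MvPolynomial.eval ![x, y]) hp
      simp [qP, tP, h] at h2
      exact (sub_eq_zero.mp h2).symm
    have h1 : a ∣ c := by
      have hz := Complex.isPrimitiveRoot_exp a (by omega)
      have h3 := key _ 1 (by rw [hz.pow_eq_one]; simp)
      rw [one_pow, mul_one] at h3
      exact hz.dvd_of_pow_eq_one c h3
    have h4 := key (2 ^ b) ((2 ^ a)⁻¹) (by
      rw [inv_pow, ← pow_mul, ← pow_mul, mul_comm b a]
      exact mul_inv_cancel₀ (pow_ne_zero _ two_ne_zero))
    rw [inv_pow, ← pow_mul, ← pow_mul, mul_inv_eq_one₀ (pow_ne_zero _ two_ne_zero)] at h4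
    have h5 : b * c = a * d := by
      have h6 : (2 : ℕ) ^ (b * c) = 2 ^ (a * d) := by exact_mod_cast h4
      exact Nat.pow_right_injective le_rfl h6
    obtain ⟨r, rfl⟩ := h1
    refine ⟨r, mul_comm _ _, ?_⟩
    apply Nat.eq_of_mul_eq_mul_left (show 0 < a by omega)
    rw [← h5]
    ring
  · rintro ⟨r, rfl, rfl⟩
    have h := sub_dvd_pow_sub_pow (1 : CQT) (qP ^ a * tP ^ b) r
    rwa [one_pow, mul_pow, ← pow_mul, ← pow_mul, mul_comm a r, mul_comm b r] at h
end
end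

section
/- Let a ≥ 1, k ≥ 1, s ≥ 0 be integers, let c be an integer with 1 ≤ c ≤ a, and let i be an integer with 1 ≤ i ≤ k. Then the polynomial 1 − q^a t^{k+1} does not divide the polynomial 1 − q^{s·a+c} t^{s·k+i} in ℂ[q,t]. -/
open MvPolynomial

noncomputable section

/-- for `a, k ≥ 1`, `s ≥ 0`, `1 ≤ c ≤ a` and `1 ≤ i ≤ k`, the polynomial
`1 - q^a t^{k+1}` does not divide `1 - q^{s·a+c} t^{s·k+i}` in `ℂ[q,t]`. -/
theorem stmt_11 (a k s c i : ℕ) (ha : 1 ≤ a) (hk : 1 ≤ k) (hc1 : 1 ≤ c) (hca : c ≤ a)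
    (hi1 : 1 ≤ i) (hik : i ≤ k) :
    ¬ (1 - qP ^ a * tP ^ (k + 1)) ∣ (1 - qP ^ (s * a + c) * tP ^ (s * k + i)) := by
  intro h
  have key : ∀ x y : ℂ, x ^ a * y ^ (k + 1) = 1 →
      x ^ (s * a + c) * y ^ (s * k + i) = 1 := by
    intro x y hxy
    obtain ⟨p, hp⟩ := h
    have h2 := congrArg (MvPolynomial.eval ![x, y]) hp
    simp [qP, tP, hxy] at h2
    exact (sub_eq_zero.mp h2).symm
  have hac : a ∣ c := by
    have hz := Complex.isPrimitiveRoot_exp a (by omega)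
    have h1 := key _ 1 (by rw [hz.pow_eq_one]; simp)
    rw [one_pow, mul_one] at h1
    have h2 := hz.dvd_of_pow_eq_one _ h1
    exact (Nat.dvd_add_right (Dvd.intro_left s rfl)).mp h2
  have hc : c = a := le_antisymm hca (Nat.le_of_dvd hc1 hac)
  subst hc
  have h1 := key (2 ^ (k + 1)) ((2 ^ c)⁻¹) (by
    rw [inv_pow, ← pow_mul, ← pow_mul, mul_comm c]
    exact mul_inv_cancel₀ (pow_ne_zero _ two_ne_zero))
  rw [inv_pow, ← pow_mul, ← pow_mul, mul_inv_eq_one₀ (pow_ne_zero _ two_ne_zero)] at h1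
  have h2 : (2 : ℕ) ^ ((k + 1) * (s * c + c)) = 2 ^ (c * (s * k + i)) := by
    exact_mod_cast h1
  have h3 := Nat.pow_right_injective le_rfl h2
  have h4 : c * ((k + 1) * (s + 1)) = c * (s * k + i) := by
    rw [← h3]; ring
  have h5 := Nat.eq_of_mul_eq_mul_left hc1 h4
  nlinarith
end
end

section
/- Let a ≥ 1, k ≥ 1, s ≥ 0 be integers and let c be an integer with 1 ≤ c ≤ a. Then the polynomial 1 − q^a t^{k+1} does not divide the product ∏_{i=1}^{k} (1 − q^{s·a+c} t^{s·k+i}) in ℂ[q,t]. -/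
open MvPolynomial

noncomputable section

/-- for `a, k ≥ 1`, `s ≥ 0` and `1 ≤ c ≤ a`, the polynomial `1 - q^a t^{k+1}`
does not divide `∏_{i=1}^{k} (1 - q^{s·a+c} t^{s·k+i})` in `ℂ[q,t]`. -/
theorem stmt_12 (a k s c : ℕ) (ha : 1 ≤ a) (hk : 1 ≤ k) (hc1 : 1 ≤ c) (hca : c ≤ a) :
    ¬ (1 - qP ^ a * tP ^ (k + 1)) ∣
        ∏ i ∈ Finset.Icc 1 k, (1 - qP ^ (s * a + c) * tP ^ (s * k + i)) := by
  intro h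
  obtain ⟨ζ, hζ⟩ : ∃ ζ : ℂ, IsPrimitiveRoot ζ (k + 1) :=
    ⟨_, Complex.isPrimitiveRoot_exp (k + 1) (by omega)⟩
  have hζn : ‖ζ‖ = 1 := hζ.norm'_eq_one (by omega)
  have h2 := map_dvd (MvPolynomial.eval ![(2 : ℂ) ^ (k + 1), ζ * ((2 : ℂ) ^ a)⁻¹]) h
  have h0 : MvPolynomial.eval ![(2 : ℂ) ^ (k + 1), ζ * ((2 : ℂ) ^ a)⁻¹]
      (1 - qP ^ a * tP ^ (k + 1)) = 0 := by
    simp only [qP, tP, map_sub, map_one, map_mul, map_pow, eval_X, Matrix.cons_val_zero,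
      Matrix.cons_val_one, mul_pow, hζ.pow_eq_one, one_mul, inv_pow]
    rw [← pow_mul, ← pow_mul, mul_comm a (k + 1), mul_inv_cancel₀ (pow_ne_zero _ two_ne_zero), sub_self]
  rw [h0, zero_dvd_iff, map_prod, Finset.prod_eq_zero_iff] at h2
  obtain ⟨i, hi, h3⟩ := h2
  rw [Finset.mem_Icc] at hi
  simp only [qP, tP, map_sub, map_one, map_mul, map_pow, eval_X, Matrix.cons_val_zero,
    Matrix.cons_val_one, mul_pow, inv_pow] at h3
  generalize hA : s * a + c = A at h3
  generalize hB : s * k + i = B at h3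
  rw [← pow_mul, ← pow_mul] at h3
  have h4 : (2 : ℂ) ^ ((k + 1) * A) * ζ ^ B = 2 ^ (a * B) := by
    have hne : (2 : ℂ) ^ (a * B) ≠ 0 := pow_ne_zero _ two_ne_zero
    field_simp at h3
    linear_combination -h3
  have h5 : (k + 1) * A = a * B := by
    have := congrArg norm h4
    simp only [norm_mul, norm_pow, hζn, one_pow, mul_one, Complex.norm_ofNat] at this
    exact pow_right_injective₀ (by norm_num : (0 : ℝ) < 2) (by norm_num) this
  have h6 : ζ ^ B = 1 := by
    rw [h5] at h4
    exact mul_left_cancel₀ (pow_ne_zero _ two_ne_zero : (2 : ℂ) ^ (a * B) ≠ 0) (by rw [h4, mul_one])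
  obtain ⟨n, hn⟩ := hζ.dvd_of_pow_eq_one B h6
  have h7 : A = a * n := by
    apply Nat.eq_of_mul_eq_mul_left (Nat.succ_pos k)
    rw [Nat.succ_eq_add_one, h5, hn]; ring
  have h8 : s < n := by
    by_contra hh
    have := Nat.mul_le_mul_left a (not_lt.mp hh)
    have := mul_comm s a
    omega
  have h9 : (k + 1) * (s + 1) ≤ (k + 1) * n := Nat.mul_le_mul_left _ h8
  nlinarith
end
end

section
/- If there is a path in the Yang–Baxter graph from u to v (that is, v is reachable from u by finitely many edges), then u ⊴ v. -/
open Finset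

/-- `u ≤_dom v`: for all `1 ≤ k ≤ N`, the sum of the first `k` entries of `u` is at most
the sum of the first `k` entries of `v`. -/
def domLE (N : ℕ) (u v : Fin N → ℕ) : Prop :=
  ∀ k : ℕ, 1 ≤ k → k ≤ N →
    (∑ j : Fin N, if (j : ℕ) < k then u j else 0) ≤
      ∑ j : Fin N, if (j : ℕ) < k then v j else 0

/-- `decSort N u = u⁺` is the weakly decreasing rearrangement of `u`
(`Tuple.sort u` is the permutation sorting `u` increasingly; reversing indices yields the
weakly decreasing rearrangement). -/
noncomputable def decSort (N : ℕ) (u : Fin N → ℕ) : Fin N → ℕ :=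
  fun j => u (Tuple.sort u j.rev)

/-- `u ⊴ v`: either (`u⁺ ≤_dom v⁺` and `u⁺ ≠ v⁺`) or (`u⁺ = v⁺` and `u ≤_dom v`). -/
def triLE (N : ℕ) (u v : Fin N → ℕ) : Prop :=
  (domLE N (decSort N u) (decSort N v) ∧ decSort N u ≠ decSort N v) ∨
    (decSort N u = decSort N v ∧ domLE N u v)

/-- `u·s_i`: the vector `u` with its entries in positions `i` and `i+1` exchanged
(0-indexed). -/
def swapMove (N i : ℕ) (hi : i + 1 < N) (u : Fin N → ℕ) : Fin N → ℕ :=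
  u ∘ ⇑(Equiv.swap (⟨i, Nat.lt_of_succ_lt hi⟩ : Fin N) ⟨i + 1, hi⟩)

/-- `uΦ = (u_2, u_3, …, u_N, u_1 + 1)`. -/
def phi (N : ℕ) (u : Fin N → ℕ) : Fin N → ℕ :=
  fun j => if h : (j : ℕ) + 1 < N then u ⟨(j : ℕ) + 1, h⟩ else u ⟨0, j.pos⟩ + 1

/-- The edge relation of the Yang–Baxter graph on `ℕ^N`: an edge `u → u·s_i` whenever
`u_i < u_{i+1}`, and an edge `u → uΦ` for every `u`. -/
def ybEdge (N : ℕ) (u v : Fin N → ℕ) : Prop :=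
  (∃ (i : ℕ) (hi : i + 1 < N),
      u ⟨i, Nat.lt_of_succ_lt hi⟩ < u ⟨i + 1, hi⟩ ∧ v = swapMove N i hi u) ∨
    v = phi N u

theorem sum_decSort (N : ℕ) (u : Fin N → ℕ) : ∑ j, decSort N u j = ∑ j, u j := by
  unfold decSort
  exact Equiv.sum_comp (Fin.revPerm.trans (Tuple.sort u)) u

theorem decSort_comp (N : ℕ) (u : Fin N → ℕ) (σ : Equiv.Perm (Fin N)) :
    decSort N (u ∘ σ) = decSort N u := by
  funext j
  exact congrFun (Tuple.comp_perm_comp_sort_eq_comp_sort (f := u) (σ := σ)) j.rev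

theorem decSort_mono (N : ℕ) (u w : Fin N → ℕ) (h : ∀ j, u j ≤ w j) (j : Fin N) :
    decSort N u j ≤ decSort N w j := by
  have key : ∀ (f : Fin N → ℕ) (a : ℕ) (i : Fin N),
      (i : ℕ) < Fintype.card {x // f x ≤ a} ↔ f (Tuple.sort f i) ≤ a := by
    intro f a i
    have h1 := Tuple.lt_card_le_iff_apply_le_of_monotone (f := f ∘ Tuple.sort f) (a := a)
      (j := i) (Tuple.monotone_sort f)
    have h2 : Fintype.card {x // (f ∘ Tuple.sort f) x ≤ a} = Fintype.card {x // f x ≤ a} :=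
      Fintype.card_congr ((Tuple.sort f).subtypeEquiv (fun x => Iff.rfl))
    rw [← h2, Fintype.card_subtype]
    exact h1
  unfold decSort
  rw [← key]
  have h3 := (key w (w (Tuple.sort w j.rev)) j.rev).2 le_rfl
  refine h3.trans_le ?_
  exact Fintype.card_subtype_mono _ _ (fun x hx => (h x).trans hx)

theorem domLE_of_le (N : ℕ) (u w : Fin N → ℕ) (h : ∀ j, u j ≤ w j) : domLE N u w := by
  intro k _ _
  refine Finset.sum_le_sum fun j _ => ?_
  split_ifs
  · exact h j
  · exact le_rfl

theorem domLE_trans (N : ℕ) {u v w : Fin N → ℕ} (h : domLE N u v) (h' : domLE N v w) :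
    domLE N u w := fun k a b => (h k a b).trans (h' k a b)

theorem domLE_swap (N i : ℕ) (hi : i + 1 < N) (u : Fin N → ℕ)
    (h : u ⟨i, Nat.lt_of_succ_lt hi⟩ < u ⟨i + 1, hi⟩) : domLE N u (swapMove N i hi u) := by
  intro k _ _
  by_cases hk : k = i + 1
  · refine Finset.sum_le_sum fun j _ => ?_
    split_ifs with hj
    · by_cases hji : j = ⟨i, Nat.lt_of_succ_lt hi⟩
      · subst hji
        simp only [swapMove, Function.comp, Equiv.swap_apply_left]
        exact h.le
      · have : j ≠ ⟨i + 1, hi⟩ := by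
          rintro rfl
          simp at hj
          omega
        simp only [swapMove, Function.comp, Equiv.swap_apply_of_ne_of_ne hji this]
        exact le_rfl
    · exact le_rfl
  · apply le_of_eq
    rw [← Equiv.sum_comp (Equiv.swap (⟨i, Nat.lt_of_succ_lt hi⟩ : Fin N) ⟨i + 1, hi⟩)]
    refine Finset.sum_congr rfl fun j _ => ?_
    simp only [swapMove, Function.comp]
    have : (((Equiv.swap (⟨i, Nat.lt_of_succ_lt hi⟩ : Fin N) ⟨i + 1, hi⟩ j : Fin N) : ℕ) < k) ↔
        ((j : ℕ) < k) := by
      rw [Equiv.swap_apply_def]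
      split_ifs with h1 h2
      · subst h1; simp; omega
      · subst h2; simp; omega
      · rfl
    simp only [this]

/-- A transitive strengthening of `triLE`. -/
def strongLE (N : ℕ) (u v : Fin N → ℕ) : Prop :=
  (domLE N (decSort N u) (decSort N v) ∧ ∑ j, u j < ∑ j, v j) ∨
    (decSort N u = decSort N v ∧ domLE N u v)

theorem strongLE_trans (N : ℕ) {u v w : Fin N → ℕ} (h : strongLE N u v)
    (h' : strongLE N v w) : strongLE N u w := by
  have hs : ∀ {a b : Fin N → ℕ}, decSort N a = decSort N b → ∑ j, a j = ∑ j, b j := by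
    intro a b hab
    rw [← sum_decSort, hab, sum_decSort]
  rcases h with ⟨h1, h2⟩ | ⟨h1, h2⟩ <;> rcases h' with ⟨h3, h4⟩ | ⟨h3, h4⟩
  · exact Or.inl ⟨domLE_trans N h1 h3, h2.trans h4⟩
  · exact Or.inl ⟨h3 ▸ h1, (hs h3) ▸ h2⟩
  · exact Or.inl ⟨h1 ▸ h3, (hs h1) ▸ h4⟩
  · exact Or.inr ⟨h1.trans h3, domLE_trans N h2 h4⟩

theorem strongLE_phi (n : ℕ) (u : Fin (n + 1) → ℕ) : strongLE (n + 1) u (phi (n + 1) u) := by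
  set w : Fin (n + 1) → ℕ := fun j => u j + if j = 0 then 1 else 0 with hw
  have hphi : phi (n + 1) u = w ∘ finRotate (n + 1) := by
    funext j
    simp only [phi, Function.comp, hw]
    by_cases h : (j : ℕ) + 1 < n + 1
    · have hr : finRotate (n + 1) j = ⟨(j : ℕ) + 1, h⟩ := by
        apply Fin.ext
        rw [coe_finRotate_of_ne_last]
        intro hj
        subst hj
        simp at h
      rw [dif_pos h, hr]
      rw [if_neg (fun h0 => Nat.succ_ne_zero _ (congrArg Fin.val h0)), add_zero]
    · have hj : j = Fin.last n := by
        apply Fin.ext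
        have := j.2
        simp
        omega
      rw [dif_neg h, hj, finRotate_last]
      simp
  left
  rw [hphi, decSort_comp]
  refine ⟨domLE_of_le _ _ _ (decSort_mono _ _ _ fun j => Nat.le_add_right _ _), ?_⟩
  have : ∑ j, (w ∘ finRotate (n + 1)) j = ∑ j, w j := Equiv.sum_comp (finRotate (n + 1)) w
  rw [this, hw, Finset.sum_add_distrib]
  simp

/-- if there is a path in the Yang–Baxter graph from `u` to `v`, then `u ⊴ v`. -/
theorem stmt_13 (N : ℕ) (hN : 2 ≤ N) (u v : Fin N → ℕ)
    (h : Relation.ReflTransGen (ybEdge N) u v) : triLE N u v := by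
  have key : strongLE N u v := by
    induction h with
    | refl => exact Or.inr ⟨rfl, fun k _ _ => le_rfl⟩
    | tail _ he ih =>
      refine strongLE_trans N ih ?_
      rcases he with ⟨i, hi, hlt, rfl⟩ | rfl
      · exact Or.inr ⟨(decSort_comp N _ _).symm, domLE_swap N i hi _ hlt⟩
      · obtain ⟨n, rfl⟩ : ∃ n, N = n + 1 := ⟨N - 1, by omega⟩
        exact strongLE_phi n _
  rcases key with ⟨h1, h2⟩ | h1
  · refine Or.inl ⟨h1, fun he => ?_⟩
    rw [← sum_decSort N u, he, sum_decSort] at h2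
    exact lt_irrefl _ h2
  · exact Or.inr h1
end

section
/- For every v ∈ ℕ^N there exists a path in the Yang–Baxter graph from the zero vector 0^N = (0,…,0) to v; that is, every vector of natural numbers is reachable from the zero vector by finitely many moves v ↦ v·s_i (allowed when v_i < v_{i+1}) and v ↦ vΦ. -/
open Finset

theorem phi_cons_aux (n : ℕ) (v : Fin (n + 1) → ℕ) (hv : 0 < v (Fin.last n)) :
    phi (n + 1) (Fin.cons (v (Fin.last n) - 1) (fun j : Fin n => v j.castSucc)) = v := by
  funext j
  unfold phi
  split_ifs with h
  · have : (⟨(j : ℕ) + 1, h⟩ : Fin (n + 1)) = Fin.succ ⟨(j : ℕ), by omega⟩ := rfl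
    rw [this, Fin.cons_succ]
    rfl
  · have h0 : (⟨0, j.pos⟩ : Fin (n + 1)) = 0 := rfl
    rw [h0, Fin.cons_zero]
    have hj : j = Fin.last n := by
      apply Fin.ext
      simp only [Fin.val_last]
      omega
    rw [hj]
    omega

theorem reach_aux (n : ℕ) (s : ℕ)
    (ih : ∀ v : Fin (n + 1) → ℕ, ∑ j, v j = s →
      Relation.ReflTransGen (ybEdge (n + 1)) (fun _ => 0) v) (d : ℕ) :
    ∀ (v : Fin (n + 1) → ℕ) (p : Fin (n + 1)), ∑ j, v j = s + 1 → (p : ℕ) + d = n → 0 < v p →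
      Relation.ReflTransGen (ybEdge (n + 1)) (fun _ => 0) v := by
  induction d with
  | zero =>
    intro v p hs hp hv
    have hpl : p = Fin.last n := by
      apply Fin.ext
      simpa using hp
    subst hpl
    refine Relation.ReflTransGen.tail (ih _ ?_) (Or.inr (phi_cons_aux n v hv).symm)
    rw [Fin.sum_univ_castSucc] at hs
    rw [Fin.sum_univ_succ]
    simp only [Fin.cons_zero, Fin.cons_succ]
    omega
  | succ d ihd =>
    intro v p hs hp hv
    have hi : (p : ℕ) + 1 < n + 1 := by omega
    by_cases hlt : v ⟨(p : ℕ) + 1, hi⟩ < v p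
    · refine Relation.ReflTransGen.tail
        (ihd (swapMove (n + 1) p hi v) ⟨(p : ℕ) + 1, hi⟩ ?_ ?_ ?_)
        (Or.inl ⟨p, hi, ?_, ?_⟩)
      · rw [← hs]
        exact Equiv.sum_comp _ v
      · simp only
        omega
      · simpa [swapMove] using hv
      · simpa [swapMove] using hlt
      · funext j
        simp [swapMove]
    · exact ihd v ⟨(p : ℕ) + 1, hi⟩ hs (by simp only; omega) (by omega)

theorem reach_sum_aux (n : ℕ) (s : ℕ) :
    ∀ v : Fin (n + 1) → ℕ, ∑ j, v j = s →
      Relation.ReflTransGen (ybEdge (n + 1)) (fun _ => 0) v := by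
  induction s with
  | zero =>
    intro v hs
    have : v = fun _ => 0 := by
      funext j
      exact (Finset.sum_eq_zero_iff.mp hs) j (Finset.mem_univ j)
    rw [this]
  | succ s ih =>
    intro v hs
    have : ∃ p, 0 < v p := by
      by_contra hc
      push Not at hc
      have : ∑ j, v j = 0 := Finset.sum_eq_zero (fun j _ => Nat.le_zero.mp (hc j))
      omega
    obtain ⟨p, hp⟩ := this
    exact reach_aux n s ih (n - p) v p hs (by omega) hp

/-- every `v ∈ ℕ^N` is reachable in the Yang–Baxter graph from the zero
vector `0^N`. -/
theorem stmt_17 (N : ℕ) (hN : 2 ≤ N) (v : Fin N → ℕ) :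
    Relation.ReflTransGen (ybEdge N) (fun _ => 0) v := by
  obtain ⟨n, rfl⟩ : ∃ n, N = n + 1 := ⟨N - 1, by omega⟩
  exact reach_sum_aux n _ v rfl
end

section
/- For every 1 ≤ i ≤ N−1 and every polynomial P in F[x_1,…,x_N], the Demazure–Lusztig operator satisfies the Bernstein–Lusztig-type relation T_i(x_{i+1}·T_i(P)) = t·x_i·P; that is, as operators, T_i ∘ X_{i+1} ∘ T_i = t·X_i, where X_j denotes multiplication by the variable x_j. -/
open MvPolynomial

noncomputable section

/-- the Bernstein–Lusztig-type relation
`T_i(x_{i+1} · T_i(P)) = t · x_i · P`, i.e. `T_i ∘ X_{i+1} ∘ T_i = t·X_i` as operators. -/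
theorem stmt_18 (N : ℕ) (hN : 2 ≤ N) (i : ℕ) (hi : i + 1 < N)
    (T : Pol N →ₗ[Frac] Pol N) (hT : IsDemazureLusztig N i hi T) (P : Pol N) :
    T (X (⟨i + 1, hi⟩ : Fin N) * T P) =
      C tF * (X (⟨i, Nat.lt_of_succ_lt hi⟩ : Fin N) * P) := by
  have h1 := hT P
  have h2 := hT (X (⟨i + 1, hi⟩ : Fin N) * T P)
  have h3 := congrArg (si N i hi) h1
  simp only [si, map_mul, map_sub, map_add, map_one, rename_X, rename_C, Equiv.swap_apply_left,
    Equiv.swap_apply_right, rename_rename] at h1 h2 h3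
  have hs : (⇑(Equiv.swap (⟨i, Nat.lt_of_succ_lt hi⟩ : Fin N) ⟨i + 1, hi⟩)) ∘
      (⇑(Equiv.swap (⟨i, Nat.lt_of_succ_lt hi⟩ : Fin N) ⟨i + 1, hi⟩)) = id := by
    funext x
    simp
  rw [hs, rename_id_apply] at h3
  have hne : (X (⟨i, Nat.lt_of_succ_lt hi⟩ : Fin N) - X ⟨i + 1, hi⟩ : Pol N) ≠ 0 := by
    rw [sub_ne_zero]
    intro h
    have := X_injective h
    simp at this
  apply mul_left_cancel₀ (mul_ne_zero hne hne)
  generalize (X (⟨i, Nat.lt_of_succ_lt hi⟩ : Fin N) : Pol N) = a at *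
  generalize (X (⟨i + 1, hi⟩ : Fin N) : Pol N) = b at *
  linear_combination (a - b) * h2 + (C tF - 1) * a * b * h1
    - ((a - b) * a - (C tF - 1) * a * b) * h3
end
end

section
/- Let K be a field, t ∈ K with t ≠ 0, V a K-vector space, and T, Y, Y' : V → V K-linear maps satisfying the quadratic Hecke relation T ∘ T = (t−1)·T + t·id and the dual Bernstein–Lusztig relation T ∘ Y' ∘ T = t·Y. Suppose P ∈ V satisfies Y(P) = α·P and Y'(P) = α'·P for scalars α, α' ∈ K with α ≠ α'. Set Q = T(P) + ((1−t)·α/(α−α'))·P. Then Y(Q) = α'·Q and Y'(Q) = α·Q; that is, applying the Yang operator to a simultaneous eigenvector produces a simultaneous eigenvector with the two eigenvalues exchanged. -/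
/-- let `K` be a field, `t ≠ 0`, `V` a `K`-vector space and `T, Y, Y'`
`K`-linear endomorphisms of `V` satisfying the quadratic Hecke relation
`T ∘ T = (t-1)·T + t·id` and the dual Bernstein–Lusztig relation `T ∘ Y' ∘ T = t·Y`.
If `P` is a simultaneous eigenvector with `Y(P) = α·P`, `Y'(P) = α'·P` and `α ≠ α'`, then
`Q = T(P) + ((1-t)·α/(α-α'))·P` satisfies `Y(Q) = α'·Q` and `Y'(Q) = α·Q`. -/
theorem stmt_19 (K : Type*) [Field K] (t : K) (ht : t ≠ 0)
    (V : Type*) [AddCommGroup V] [Module K V]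
    (T Y Y' : V →ₗ[K] V)
    (hHecke : ∀ v : V, T (T v) = (t - 1) • T v + t • v)
    (hBL : ∀ v : V, T (Y' (T v)) = t • Y v)
    (P : V) (α α' : K) (hαα' : α ≠ α')
    (hY : Y P = α • P) (hY' : Y' P = α' • P) :
    Y (T P + ((1 - t) * α / (α - α')) • P) = α' • (T P + ((1 - t) * α / (α - α')) • P) ∧
    Y' (T P + ((1 - t) * α / (α - α')) • P) = α • (T P + ((1 - t) * α / (α - α')) • P) := by
  have hd : α - α' ≠ 0 := sub_ne_zero.mpr hαα'
  have h1 : T (Y' (T P)) = (t * α) • P := by rw [hBL, hY, smul_smul]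
  have h2 : Y' (T P) = α • T P + ((1 - t) * α) • P := by
    have h := hHecke (Y' (T P))
    rw [h1, map_smul] at h
    have h3 : t • Y' (T P) = t • (α • T P + ((1 - t) * α) • P) := by
      rw [eq_sub_of_add_eq' h.symm]
      module
    exact smul_right_injective V ht h3
  have h4 : Y (T P) = α' • T P + ((t - 1) * α) • P := by
    have h := hBL (T P)
    rw [hHecke P, map_add, map_smul, map_smul, hY', map_add, map_smul, map_smul, map_smul, h1] at h
    have h3 : t • Y (T P) = t • (α' • T P + ((t - 1) * α) • P) := by
      rw [← h]
      module
    exact smul_right_injective V ht h3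
  obtain ⟨c, hc⟩ : ∃ c, c = (1 - t) * α / (α - α') := ⟨_, rfl⟩
  rw [← hc]
  have hc' : (1 - t) * α = c * (α - α') := by rw [hc]; field_simp
  have hc2 : (t - 1) * α = - (c * (α - α')) := by rw [← hc']; ring
  rw [hc'] at h2
  rw [hc2] at h4
  constructor
  · rw [map_add, map_smul, h4, hY]
    module
  · rw [map_add, map_smul, h2, hY']
    module
end
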